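/- Suppose the connection D on U is compatible with the metric g. Then for all vector fields a, b, c on U and every x ∈ U, ⟪g x (ρ(a,b,c) x), c x⟫ = 0, i.e. the curvature field satisfies ρ(a,b,c) ·_g c = 0. -/

import Mathlib

open scoped RealInnerProductSpace

variable {V : Type*} [NormedAddCommGroup V] [InnerProductSpace ℝ V] [FiniteDimensional ℝ V]

/-- A vector field on `U` is a smooth map `U → V`. -/
def IsVectorField (U : Set V) (X : V → V) : Prop := ContDiffOn ℝ (⊤ : ℕ∞) X U

/-- Directional derivative `(a·∂X)(x) = fderiv ℝ X x (a x)`. -/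
noncomputable def dirD (a X : V → V) : V → V := fun x => fderiv ℝ X x (a x)

/-- Lie bracket `[a,b] = a·∂b − b·∂a`. -/
noncomputable def bracket (a b : V → V) : V → V := fun x => dirD a b x - dirD b a x

/-- Smoothness of a connection field `Γ`. -/
def IsConnection (U : Set V) (Γ : V → V →ₗ[ℝ] V →ₗ[ℝ] V) : Prop :=
  ∀ u v : V, ContDiffOn ℝ (⊤ : ℕ∞) (fun x => Γ x u v) U

/-- Covariant derivative associated to the connection field `Γ`. -/
noncomputable def covD (Γ : V → V →ₗ[ℝ] V →ₗ[ℝ] V) (a X : V → V) : V → V :=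
  fun x => fderiv ℝ X x (a x) + Γ x (a x) (X x)

/-- Curvature of an abstract covariant-derivative operator. -/
noncomputable def curvOf (Dop : (V → V) → (V → V) → (V → V)) (a b c : V → V) : V → V :=
  fun x => Dop a (Dop b c) x - Dop b (Dop a c) x - Dop (bracket a b) c x

/-- Curvature field `ρ(a,b,c) = D_a (D_b c) − D_b (D_a c) − D_{[a,b]} c`. -/
noncomputable def curv (Γ : V → V →ₗ[ℝ] V →ₗ[ℝ] V) : (V → V) → (V → V) → (V → V) → V → V :=
  curvOf (covD Γ)

/-- A metric on `U`: smooth, pointwise self-adjoint and invertible. -/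
def IsMetric (U : Set V) (g : V → V →ₗ[ℝ] V) : Prop :=
  (∀ u : V, ContDiffOn ℝ (⊤ : ℕ∞) (fun x => g x u) U) ∧
  ∀ x ∈ U, (∀ u v : V, ⟪g x u, v⟫ = ⟪u, g x v⟫) ∧ Function.Bijective (g x)

/-- Compatibility of an abstract covariant-derivative operator with the metric `g`:
`a·∂(X ·_g Y) = (D_a X) ·_g Y + X ·_g (D_a Y)` on `U`. -/
def CompatibleD (U : Set V) (Dop : (V → V) → (V → V) → (V → V)) (g : V → V →ₗ[ℝ] V) : Prop :=
  ∀ a X Y : V → V, IsVectorField U a → IsVectorField U X → IsVectorField U Y →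
    ∀ x ∈ U, fderiv ℝ (fun y => ⟪g y (X y), Y y⟫) x (a x) =
      ⟪g x (Dop a X x), Y x⟫ + ⟪g x (X x), Dop a Y x⟫

/-- Compatibility of the connection `Γ` with the metric `g`. -/
def Compatible (U : Set V) (Γ : V → V →ₗ[ℝ] V →ₗ[ℝ] V) (g : V → V →ₗ[ℝ] V) : Prop :=
  CompatibleD U (covD Γ) g

/-!
A compatible derivative `D` obeys the Leibniz rule for `X ·_g Y`, so applying `a·∂(b·∂) − b·∂(a·∂)`
to the scalar field `X ·_g Y` cancels the mixed terms `D_a X ·_g D_b Y`. The operator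
`a·∂(b·∂) − b·∂(a·∂)` is differentiation along `[a,b]`, and the Leibniz rule for `D_{[a,b]}` turns
the result into `ρ(a,b,X) ·_g Y + X ·_g ρ(a,b,Y) = 0`. When `g` is symmetric, `X = Y = c` gives
`2 ρ(a,b,c) ·_g c = 0`.
-/

open scoped ContDiff

section LinearMapFields

variable {𝕜 G E F : Type*} [NontriviallyNormedField 𝕜] [CompleteSpace 𝕜]
  [NormedAddCommGroup G] [NormedSpace 𝕜 G] [NormedAddCommGroup E] [NormedSpace 𝕜 E]
  [FiniteDimensional 𝕜 E] [NormedAddCommGroup F] [NormedSpace 𝕜 F]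

theorem contDiffOn_linearMap_apply {n : ℕ∞ω} {s : Set G} {L : G → E →ₗ[𝕜] F} {X : G → E}
    (hL : ∀ u, ContDiffOn 𝕜 n (fun x => L x u) s) (hX : ContDiffOn 𝕜 n X s) :
    ContDiffOn 𝕜 n (fun x => L x (X x)) s :=
  (contDiffOn_clm_apply (f := fun x => (L x).toContinuousLinearMap).2 hL).clm_apply hX

end LinearMapFields

section AbstractDerivative

variable {E : Type*} [NormedAddCommGroup E] [InnerProductSpace ℝ E] {U : Set E}

theorem IsVectorField.differentiableAt {X : E → E} (hX : IsVectorField U X) (hU : IsOpen U)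
    {x : E} (hx : x ∈ U) : DifferentiableAt ℝ X x :=
  (hX.contDiffAt (hU.mem_nhds hx)).differentiableAt (by simp)

theorem IsVectorField.dirD {a X : E → E} (ha : IsVectorField U a) (hX : IsVectorField U X)
    (hU : IsOpen U) : IsVectorField U (dirD a X) :=
  (hX.fderiv_of_isOpen hU le_rfl).clm_apply ha

theorem IsVectorField.bracket {a b : E → E} (ha : IsVectorField U a) (hb : IsVectorField U b)
    (hU : IsOpen U) : IsVectorField U (bracket a b) :=
  (ha.dirD hb hU).sub (hb.dirD ha hU)

theorem bracket_eq_lieBracket (a b : E → E) : bracket a b = VectorField.lieBracket ℝ a b :=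
  rfl

/-- The `g`-scalar product `X ·_g Y` of two vector fields, as a scalar field; here `g` is any field
of endomorphisms. -/
noncomputable def gProd (g : E → E →ₗ[ℝ] E) (X Y : E → E) : E → ℝ := fun x => ⟪g x (X x), Y x⟫

/-- Smoothness of the bilinear form field `(X, Y) ↦ X ·_g Y`, expressed by its values on vector
fields, because pointwise smoothness of `x ↦ g x u` does not suffice in infinite dimension. -/
def IsSmoothForm (U : Set E) (g : E → E →ₗ[ℝ] E) : Prop :=
  ∀ X Y : E → E, IsVectorField U X → IsVectorField U Y → ContDiffOn ℝ ∞ (gProd g X Y) U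

/-- `D` maps vector fields on `U` to vector fields on `U`. It stands for a covariant derivative
given as an operator, without connection coefficients. -/
def PreservesVectorFields (U : Set E) (D : (E → E) → (E → E) → (E → E)) : Prop :=
  ∀ a X : E → E, IsVectorField U a → IsVectorField U X → IsVectorField U (D a X)

variable {D : (E → E) → (E → E) → (E → E)} {g : E → E →ₗ[ℝ] E} {a b X Y : E → E} {x : E}

theorem IsSmoothForm.differentiableAt (hg : IsSmoothForm U g) (hU : IsOpen U)
    (hX : IsVectorField U X) (hY : IsVectorField U Y) (hx : x ∈ U) :
    DifferentiableAt ℝ (gProd g X Y) x :=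
  ((hg X Y hX hY).contDiffAt (hU.mem_nhds hx)).differentiableAt (by simp)

theorem CompatibleD.fderiv_gProd (hcomp : CompatibleD U D g) (ha : IsVectorField U a)
    (hX : IsVectorField U X) (hY : IsVectorField U Y) (hx : x ∈ U) :
    fderiv ℝ (gProd g X Y) x (a x) = gProd g (D a X) Y x + gProd g X (D a Y) x :=
  hcomp a X Y ha hX hY x hx

theorem CompatibleD.fderiv_fderiv_gProd (hcomp : CompatibleD U D g) (hU : IsOpen U)
    (hD : PreservesVectorFields U D) (hg : IsSmoothForm U g)
    (ha : IsVectorField U a) (hb : IsVectorField U b)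
    (hX : IsVectorField U X) (hY : IsVectorField U Y) (hx : x ∈ U) :
    fderiv ℝ (fun y => fderiv ℝ (gProd g X Y) y (b y)) x (a x) =
      gProd g (D a (D b X)) Y x + gProd g (D b X) (D a Y) x +
        (gProd g (D a X) (D b Y) x + gProd g X (D a (D b Y)) x) := by
  have hbX : IsVectorField U (D b X) := hD b X hb hX
  have hbY : IsVectorField U (D b Y) := hD b Y hb hY
  have leibniz : (fun y => fderiv ℝ (gProd g X Y) y (b y)) =ᶠ[nhds x]
      gProd g (D b X) Y + gProd g X (D b Y) := by
    filter_upwards [hU.mem_nhds hx] with y hy using hcomp.fderiv_gProd hb hX hY hy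
  rw [leibniz.fderiv_eq, fderiv_add (hg.differentiableAt hU hbX hY hx)
    (hg.differentiableAt hU hX hbY hx), add_apply, hcomp.fderiv_gProd ha hbX hY hx,
    hcomp.fderiv_gProd ha hX hbY hx]

theorem IsSmoothForm.fderiv_gProd_bracket (hg : IsSmoothForm U g) (hU : IsOpen U)
    (ha : IsVectorField U a) (hb : IsVectorField U b)
    (hX : IsVectorField U X) (hY : IsVectorField U Y) (hx : x ∈ U) :
    fderiv ℝ (gProd g X Y) x (bracket a b x) =
      fderiv ℝ (fun y => fderiv ℝ (gProd g X Y) y (b y)) x (a x) -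
        fderiv ℝ (fun y => fderiv ℝ (gProd g X Y) y (a y)) x (b x) := by
  rw [bracket_eq_lieBracket]
  exact VectorField.fderiv_apply_lieBracket ((hg X Y hX hY).contDiffAt (hU.mem_nhds hx))
    (by simpa using ENat.LEInfty.out) (hb.differentiableAt hU hx) (ha.differentiableAt hU hx)

theorem gProd_curvOf_left (D : (E → E) → (E → E) → (E → E)) (g : E → E →ₗ[ℝ] E)
    (a b X Y : E → E) (x : E) :
    gProd g (curvOf D a b X) Y x =
      gProd g (D a (D b X)) Y x - gProd g (D b (D a X)) Y x - gProd g (D (bracket a b) X) Y x := by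
  simp only [gProd, curvOf, map_sub, inner_sub_left]

theorem gProd_curvOf_right (D : (E → E) → (E → E) → (E → E)) (g : E → E →ₗ[ℝ] E)
    (a b X Y : E → E) (x : E) :
    gProd g X (curvOf D a b Y) x =
      gProd g X (D a (D b Y)) x - gProd g X (D b (D a Y)) x - gProd g X (D (bracket a b) Y) x := by
  simp only [gProd, curvOf, inner_sub_right]

theorem CompatibleD.gProd_curvOf_add_gProd_curvOf (hcomp : CompatibleD U D g) (hU : IsOpen U)
    (hD : PreservesVectorFields U D) (hg : IsSmoothForm U g)
    (ha : IsVectorField U a) (hb : IsVectorField U b)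
    (hX : IsVectorField U X) (hY : IsVectorField U Y) (hx : x ∈ U) :
    gProd g (curvOf D a b X) Y x + gProd g X (curvOf D a b Y) x = 0 := by
  have commutator := hg.fderiv_gProd_bracket hU ha hb hX hY hx
  rw [hcomp.fderiv_gProd (ha.bracket hb hU) hX hY hx,
    hcomp.fderiv_fderiv_gProd hU hD hg ha hb hX hY hx,
    hcomp.fderiv_fderiv_gProd hU hD hg hb ha hX hY hx] at commutator
  rw [gProd_curvOf_left, gProd_curvOf_right]
  linear_combination -commutator

theorem gProd_comm (hgx : (g x).IsSymmetric) (X Y : E → E) : gProd g X Y x = gProd g Y X x :=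
  (hgx (X x) (Y x)).trans (real_inner_comm _ _)

theorem curvature_g_orthogonal_general (hU : IsOpen U) (hD : PreservesVectorFields U D)
    (hg : IsSmoothForm U g) (hcomp : CompatibleD U D g) {c : E → E}
    (ha : IsVectorField U a) (hb : IsVectorField U b) (hc : IsVectorField U c)
    (hx : x ∈ U) (hgx : (g x).IsSymmetric) : ⟪g x (curvOf D a b c x), c x⟫ = 0 := by
  have skew := hcomp.gProd_curvOf_add_gProd_curvOf hU hD hg ha hb hc hc hx
  rw [gProd_comm hgx c] at skew
  exact add_self_eq_zero.1 skew

end AbstractDerivative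

theorem IsMetric.isSmoothForm {U : Set V} {g : V → V →ₗ[ℝ] V} (hg : IsMetric U g) :
    IsSmoothForm U g :=
  fun _ _ hX hY => (contDiffOn_linearMap_apply hg.1 hX).inner ℝ hY

theorem IsConnection.preservesVectorFields {U : Set V} {Γ : V → V →ₗ[ℝ] V →ₗ[ℝ] V}
    (hΓ : IsConnection U Γ) (hU : IsOpen U) : PreservesVectorFields U (covD Γ) := by
  intro a X ha hX
  have hΓa : ∀ u, ContDiffOn ℝ ∞ (fun x => Γ x (a x) u) U := fun u =>
    contDiffOn_linearMap_apply (L := fun x => (Γ x).flip u) (fun v => hΓ v u) ha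
  exact (ha.dirD hX hU).add (contDiffOn_linearMap_apply hΓa hX)

theorem curvature_g_orthogonal
    (U : Set V) (hU : IsOpen U)
    (Γ : V → V →ₗ[ℝ] V →ₗ[ℝ] V) (hΓ : IsConnection U Γ)
    (g : V → V →ₗ[ℝ] V) (hg : IsMetric U g)
    (hcomp : Compatible U Γ g)
    (a b c : V → V) (ha : IsVectorField U a) (hb : IsVectorField U b)
    (hc : IsVectorField U c)
    (x : V) (hx : x ∈ U) :
    ⟪g x (curv Γ a b c x), c x⟫ = 0 :=
  curvature_g_orthogonal_general hU (hΓ.preservesVectorFields hU) hg.isSmoothForm hcomp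
    ha hb hc hx (hg.2 x hx).1
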